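/- arXiv:hep-th/0306220 — 6 statements merged into one kernel-verified Lean document; each statement's English description precedes it below -/
import Mathlib

section
/- Let X be a type, M an additive commutative group, and p ≥ 1. Suppose f : X^p → M is antisymmetric, i.e. interchanging any two of its arguments changes its sign. Define Af : X^{p+1} → M by Af(x_1,...,x_{p+1}) = f(x_1,...,x_p) − Σ_{i=1}^{p} f(x_1,...,x_{i−1},x_{p+1},x_{i+1},...,x_p). Then the operator A is nilpotent on f: for all x_1,...,x_{p+2} ∈ X, (A(Af))(x_1,...,x_{p+2}) = Af(x_1,...,x_{p+1}) − Σ_{i=1}^{p+1} Af(x_1,...,x_{i−1},x_{p+2},x_{i+1},...,x_{p+1}) = 0. -/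
/-!
Write `x = (y, a, b)` with `y : Fin p → X`. For every `f`, the expansion of `A(Af)(y, a, b)`
reduces to `∑ f (y[i := b][j := a])` over the pairs `i ≠ j`: the diagonal terms
`y[i := b][i := a] = y[i := a]` of the double sum cancel the single sum in `Af(y, a)`.
Interchanging the arguments `i` and `j` turns the term at `(i, j)` into the one at `(j, i)`, so
antisymmetry cancels the remaining terms in pairs, without dividing by two.
-/

/-- The antisymmetrisation operator: given `f` of `p` arguments, produce a function of
`p+1` arguments by
`Af(x_1,...,x_{p+1}) = f(x_1,...,x_p) − Σ_{i=1}^{p} f(x_1,...,x_{i−1},x_{p+1},x_{i+1},...,x_p)`. -/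
def AOp {X M : Type*} [AddCommGroup M] {p : ℕ}
    (f : (Fin p → X) → M) : (Fin (p + 1) → X) → M :=
  fun x =>
    f (x ∘ Fin.castSucc) -
      ∑ i : Fin p, f (Function.update (x ∘ Fin.castSucc) i (x (Fin.last p)))

section DoubleSums

variable {ι M : Type*}

lemma sum_sum_eq_sum_diag_add_sum_offDiag [AddCommMonoid M] (s : Finset ι) (g : ι → ι → M) :
    ∑ i ∈ s, ∑ j ∈ s, g i j = ∑ i ∈ s, g i i + ∑ q ∈ s.offDiag, g q.1 q.2 := by
  classical
  rw [← Finset.sum_product', ← Finset.diag_union_offDiag,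
    Finset.sum_union (Finset.disjoint_diag_offDiag s), Finset.sum_diag]

lemma sum_offDiag_eq_zero_of_add_swap_eq_zero [AddCommMonoid M] (s : Finset ι) {g : ι × ι → M}
    (hg : ∀ q ∈ s.offDiag, g q + g q.swap = 0) :
    ∑ q ∈ s.offDiag, g q = 0 := by
  refine Finset.sum_involution (fun q _ => q.swap) hg (fun q hq _ hswap => ?_)
    (fun q hq => ?_) (fun q _ => q.swap_swap)
  · exact (Finset.mem_offDiag.mp hq).2.2 (congrArg Prod.snd hswap)
  · obtain ⟨hi, hj, hne⟩ := Finset.mem_offDiag.mp hq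
    exact Finset.mem_offDiag.mpr ⟨hj, hi, hne.symm⟩

end DoubleSums

lemma update_update_comp_swap {ι X : Type*} [DecidableEq ι] (y : ι → X) (a b : X) {i j : ι}
    (hij : i ≠ j) :
    Function.update (Function.update y i b) j a ∘ Equiv.swap i j =
      Function.update (Function.update y j b) i a := by
  rw [Equiv.comp_swap_eq_update, Function.update_self, Function.update_of_ne hij,
    Function.update_self, Function.update_idem, Function.update_comm hij, Function.update_idem]

section AOp

variable {X M : Type*} [AddCommGroup M] {p : ℕ}

lemma AOp_snoc (f : (Fin p → X) → M) (y : Fin p → X) (a : X) :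
    AOp f (Fin.snoc y a : Fin (p + 1) → X) = f y - ∑ i, f (Function.update y i a) := by
  simp only [AOp, Fin.snoc_comp_castSucc, Fin.snoc_last]

lemma AOp_AOp_snoc_snoc (f : (Fin p → X) → M) (y : Fin p → X) (a b : X) :
    AOp (AOp f) (Fin.snoc (Fin.snoc y a : Fin (p + 1) → X) b : Fin (p + 2) → X) =
      ∑ q ∈ Finset.univ.offDiag, f (Function.update (Function.update y q.1 b) q.2 a) := by
  have hsplit : ∑ i, ∑ j, f (Function.update (Function.update y i b) j a) =
      ∑ i, f (Function.update y i a) +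
        ∑ q ∈ Finset.univ.offDiag, f (Function.update (Function.update y q.1 b) q.2 a) := by
    simp only [sum_sum_eq_sum_diag_add_sum_offDiag, Function.update_idem]
  calc AOp (AOp f) (Fin.snoc (Fin.snoc y a : Fin (p + 1) → X) b : Fin (p + 2) → X)
      = f y - ∑ i, f (Function.update y i a) -
          (∑ i, (f (Function.update y i b) -
              ∑ j, f (Function.update (Function.update y i b) j a)) +
            (f y - ∑ i, f (Function.update y i b))) := by
        simp only [AOp_snoc, Fin.sum_univ_castSucc, ← Fin.snoc_update, Fin.update_snoc_last]
    _ = ∑ q ∈ Finset.univ.offDiag, f (Function.update (Function.update y q.1 b) q.2 a) := by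
        rw [Finset.sum_sub_distrib, hsplit]
        abel

end AOp

/-- If `f` is antisymmetric then `A(Af) = 0`. -/
theorem stmt0 {X M : Type*} [AddCommGroup M] {p : ℕ} (hp : 1 ≤ p)
    (f : (Fin p → X) → M)
    (hf : ∀ (x : Fin p → X) (i j : Fin p), i ≠ j → f (x ∘ Equiv.swap i j) = - f x) :
    ∀ x : Fin (p + 2) → X, AOp (AOp f) x = 0 := by
  intro x
  rw [← Fin.snoc_init_self x, ← Fin.snoc_init_self (Fin.init x), AOp_AOp_snoc_snoc]
  refine sum_offDiag_eq_zero_of_add_swap_eq_zero _ fun q hq => ?_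
  have hne : q.1 ≠ q.2 := (Finset.mem_offDiag.mp hq).2.2
  rw [Prod.fst_swap, Prod.snd_swap, ← update_update_comp_swap _ _ _ hne, hf _ _ _ hne,
    add_neg_cancel]
end

section
/- Let X be a type, M an additive commutative group, and p ≥ 1. If f : X^p → M is antisymmetric (interchanging any two of its arguments changes its sign), then Af : X^{p+1} → M, defined by Af(x_1,...,x_{p+1}) = f(x_1,...,x_p) − Σ_{i=1}^{p} f(x_1,...,x_{i−1},x_{p+1},x_{i+1},...,x_p), is also antisymmetric in its p+1 arguments. -/
open Function Equiv

/-- A function of a family of arguments is antisymmetric if interchanging any two of the arguments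
changes its sign. The arguments are indexed by an arbitrary type `ι`; functions of `p` arguments
are the case `ι = Fin p`. -/
def IsAntisymmetric {ι X M : Type*} [DecidableEq ι] [Neg M] (f : (ι → X) → M) : Prop :=
  ∀ (x : ι → X) (i j : ι), i ≠ j → f (x ∘ swap i j) = -f x

theorem isAntisymmetric_of_castSucc_of_last {X M : Type*} [Neg M] {p : ℕ}
    {g : (Fin (p + 1) → X) → M}
    (h_castSucc : ∀ (x : Fin (p + 1) → X) (i j : Fin p), i ≠ j →
      g (x ∘ swap i.castSucc j.castSucc) = -g x)
    (h_last : ∀ (x : Fin (p + 1) → X) (i : Fin p),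
      g (x ∘ swap i.castSucc (Fin.last p)) = -g x) :
    IsAntisymmetric g := by
  intro x i j hij
  cases i using Fin.lastCases with
  | last =>
    cases j using Fin.lastCases with
    | last => exact absurd rfl hij
    | cast j => rw [swap_comm, h_last]
  | cast i =>
    cases j using Fin.lastCases with
    | last => exact h_last x i
    | cast j => exact h_castSucc x i j (ne_of_apply_ne Fin.castSucc hij)

theorem comp_swap_castSucc_last_comp_castSucc {X : Type*} {p : ℕ} (x : Fin (p + 1) → X)
    (i : Fin p) :
    (x ∘ swap i.castSucc (Fin.last p)) ∘ Fin.castSucc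
      = update (x ∘ Fin.castSucc) i (x (Fin.last p)) := by
  have last_notMem_range : Fin.last p ∉ Set.range Fin.castSucc := by
    rintro ⟨k, hk⟩
    exact Fin.castSucc_ne_last k hk
  rw [comp_swap_eq_update, update_comp_eq_of_injective _ (Fin.castSucc_injective p),
    update_comp_eq_of_notMem_range _ _ last_notMem_range]

namespace IsAntisymmetric

variable {ι X M : Type*} [DecidableEq ι] {f g : (ι → X) → M}

theorem map_update_update [Neg M] (hf : IsAntisymmetric f) (x : ι → X) (z : X) {i k : ι}
    (hik : i ≠ k) :
    f (update (update x i z) k (x i)) = -f (update x k z) := by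
  rw [← hf (update x k z) i k hik, comp_swap_eq_update, update_idem, update_self,
    update_of_ne hik, update_comm hik]

variable [AddCommGroup M]

theorem sub (hf : IsAntisymmetric f) (hg : IsAntisymmetric g) : IsAntisymmetric (f - g) := by
  intro x i j hij
  rw [Pi.sub_apply, Pi.sub_apply, hf x i j hij, hg x i j hij, neg_sub_neg, neg_sub]

variable [Fintype ι]

theorem sum_update (hf : IsAntisymmetric f) (z : X) :
    IsAntisymmetric fun x => ∑ k, f (update x k z) := by
  intro x i j hij
  have update_comp_swap (k : ι) :
      update (x ∘ swap i j) k z = update x (swap i j k) z ∘ swap i j := by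
    rw [update_comp_equiv, symm_swap, swap_apply_self]
  calc ∑ k, f (update (x ∘ swap i j) k z)
      = ∑ k, -f (update x (swap i j k) z) := by
        simp only [update_comp_swap, hf _ i j hij]
    _ = ∑ k, -f (update x k z) := Equiv.sum_comp _ fun k => -f (update x k z)
    _ = -∑ k, f (update x k z) := Finset.sum_neg_distrib _

theorem sub_sum_update_exchange (hf : IsAntisymmetric f) (x : ι → X) (z : X) (i : ι) :
    f (update x i z) - ∑ k, f (update (update x i z) k (x i))
      = -(f x - ∑ k, f (update x k z)) := by
  have term_self : f (update (update x i z) i (x i)) = f x := by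
    rw [update_idem, update_eq_self]
  have sum_others : ∑ k ∈ {i}ᶜ, f (update (update x i z) k (x i))
      = -∑ k ∈ {i}ᶜ, f (update x k z) := by
    rw [← Finset.sum_neg_distrib]
    refine Finset.sum_congr rfl fun k hk => hf.map_update_update x z ?_
    rintro rfl
    simp at hk
  rw [Fintype.sum_eq_add_sum_compl i, Fintype.sum_eq_add_sum_compl i fun k => f (update x k z),
    term_self, sum_others]
  abel

theorem aOp {p : ℕ} {f : (Fin p → X) → M} (hf : IsAntisymmetric f) : IsAntisymmetric (AOp f) := by
  refine isAntisymmetric_of_castSucc_of_last (fun x i j hij => ?_) fun x i => ?_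
  · have fixes_last : swap i.castSucc j.castSucc (Fin.last p) = Fin.last p :=
      swap_apply_of_ne_of_ne (Fin.castSucc_ne_last i).symm (Fin.castSucc_ne_last j).symm
    simp only [AOp, comp_assoc, (Fin.castSucc_injective p).swap_comp, comp_apply, fixes_last]
    exact hf.sub (hf.sum_update (x (Fin.last p))) (x ∘ Fin.castSucc) i j hij
  · simp only [AOp, comp_swap_castSucc_last_comp_castSucc, comp_apply, swap_apply_right]
    exact hf.sub_sum_update_exchange (x ∘ Fin.castSucc) (x (Fin.last p)) i

end IsAntisymmetric

/-- If `f` is antisymmetric in its `p` arguments, then `Af` is antisymmetric in its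
`p+1` arguments. -/
theorem stmt1 {X M : Type*} [AddCommGroup M] {p : ℕ} (hp : 1 ≤ p)
    (f : (Fin p → X) → M)
    (hf : ∀ (x : Fin p → X) (i j : Fin p), i ≠ j → f (x ∘ Equiv.swap i j) = - f x) :
    ∀ (x : Fin (p + 1) → X) (i j : Fin (p + 1)), i ≠ j →
      AOp f (x ∘ Equiv.swap i j) = - AOp f x :=
  IsAntisymmetric.aOp hf
end

section
/- Let V and W be real vector spaces, p ≥ 1, and f : V^p → W an alternating multilinear map (multilinear, and vanishing whenever two arguments are equal). Let θ^1,...,θ^{p+1} ∈ V, and let X_{rs} ∈ V be given for all pairs r ≠ s in {1,...,p+1} with X_{rs} = X_{sr}. For r ≠ s, let L_{rs} ∈ V^p denote the ordered list obtained from (θ^1,...,θ^{p+1}) by deleting the entry θ^s and replacing the entry θ^r by X_{rs}. Then Σ_{s=1}^{p+1} (−1)^{s−1} Σ_{r=1, r≠s}^{p+1} f(L_{rs}) = 0. -/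
/-!
The terms indexed by `(s, r)` and `(r, s)` cancel: both `L_{rs}` and `L_{sr}` arise from the tuple
`θ` with its entries `r` and `s` both replaced by `X_{rs} = X_{sr}`, by deleting one of these two
equal entries, so they differ by a permutation of sign `(-1) ^ (r + s + 1)`.
-/

open Finset Function

theorem sum_sum_erase_eq_zero_of_add_swap_eq_zero {ι M : Type*} [DecidableEq ι] [AddCommMonoid M]
    {t : Finset ι} {F : ι → ι → M} (hF : ∀ i ∈ t, ∀ j ∈ t, i ≠ j → F i j + F j i = 0) :
    ∑ i ∈ t, ∑ j ∈ t.erase i, F i j = 0 := by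
  have sum_offDiag : ∑ a ∈ t.offDiag, F a.1 a.2 = ∑ i ∈ t, ∑ j ∈ t.erase i, F i j :=
    sum_finset_product _ _ _ fun a ↦ by grind
  rw [← sum_offDiag]
  refine sum_involution (fun a _ ↦ a.swap) (fun a ha ↦ ?_) (fun a ha _ ↦ ?_) (fun a ha ↦ ?_)
    fun a _ ↦ a.swap_swap
  · obtain ⟨hi, hj, hij⟩ := mem_offDiag.1 ha
    exact hF _ hi _ hj hij
  · grind
  · grind

theorem removeNth_update_eq_ite {α : Type*} {n : ℕ} (i j : Fin (n + 1)) (v : Fin (n + 1) → α)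
    (x : α) :
    i.removeNth (update v j x) = fun k ↦ if i.succAbove k = j then x else v (i.succAbove k) :=
  funext fun k ↦ update_apply v j x (i.succAbove k)

section AlternatingMap

variable {R M N : Type*} [CommRing R] [AddCommGroup M] [Module R M] [AddCommGroup N] [Module R N]
  {n : ℕ}

theorem neg_one_pow_smul_map_removeNth_update_add_swap_eq_zero (f : M [⋀^Fin n]→ₗ[R] N)
    (v : Fin (n + 1) → M) (x : M) {i j : Fin (n + 1)} (hij : i ≠ j) :
    (-1 : ℤ) ^ (i : ℕ) • f (i.removeNth (update v j x)) +
      (-1 : ℤ) ^ (j : ℕ) • f (j.removeNth (update v i x)) = 0 := by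
  have entries_eq : update (update v j x) i x i = update (update v j x) i x j := by
    simp [hij.symm]
  have cancel := f.neg_one_pow_smul_map_removeNth_add_eq_zero_of_eq entries_eq hij
  rwa [Fin.removeNth_update, update_comm hij.symm, Fin.removeNth_update] at cancel

theorem stmt8_general (f : M [⋀^Fin n]→ₗ[R] N) (v : Fin (n + 1) → M)
    (X : Fin (n + 1) → Fin (n + 1) → M) (hX : ∀ r s, r ≠ s → X r s = X s r) :
    ∑ s : Fin (n + 1), (-1 : ℤ) ^ (s : ℕ) •
      ∑ r ∈ univ.erase s, f (s.removeNth (update v r (X r s))) = 0 := by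
  simp only [smul_sum]
  refine sum_sum_erase_eq_zero_of_add_swap_eq_zero fun s _ r _ hsr ↦ ?_
  rw [hX s r hsr]
  exact neg_one_pow_smul_map_removeNth_update_add_swap_eq_zero f v (X r s) hsr

end AlternatingMap

/-- The key cancellation in the proof of the composition rule for generalised
Chern–Simons forms: for an alternating multilinear map `f` in `p` variables,
vectors `θ^1,...,θ^{p+1}` and a symmetric array `X_{rs} = X_{sr}`,
`Σ_{s=1}^{p+1} (−1)^{s−1} Σ_{r ≠ s} f(L_{rs}) = 0`, where `L_{rs}` is obtained from
`(θ^1,...,θ^{p+1})` by deleting the entry `θ^s` and replacing the entry `θ^r` by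
`X_{rs}`.  (Indices `0`-based, so the sign is `(−1)^s`.) -/
theorem stmt8 {V W : Type*} [AddCommGroup V] [Module ℝ V] [AddCommGroup W] [Module ℝ W]
    {p : ℕ} (hp : 1 ≤ p) (f : AlternatingMap ℝ V W (Fin p))
    (θ : Fin (p + 1) → V) (X : Fin (p + 1) → Fin (p + 1) → V)
    (hX : ∀ r s : Fin (p + 1), r ≠ s → X r s = X s r) :
    ∑ s : Fin (p + 1), (-1 : ℤ) ^ (s : ℕ) •
      ∑ r ∈ Finset.univ.erase s,
        f (fun i : Fin p =>
          if Fin.succAbove s i = r then X r s else θ (Fin.succAbove s i)) = 0 := by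
  simpa only [removeNth_update_eq_ite] using stmt8_general f θ X hX
end

section
/- Let V and W be real vector spaces, p ≥ 1, and f : V^p → W an alternating multilinear map. Let θ^1,...,θ^p ∈ V and t_1,...,t_p ∈ ℝ, and for q ∈ {1,...,p} define θ^q_* = Σ_{r=q}^{p} [∏_{i=1, i≠q}^{r} (1−t_i)] θ^r. Then f(θ^1_*, θ^2_*, ..., θ^p_*) = [∏_{r=1}^{p−1} (1−t_r)^{p−r}] · f(θ^1, θ^2, ..., θ^p). -/
/-!
The family `θ_*` is obtained from `θ` by a triangular substitution. When `f` is expanded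
multilinearly, its terms are indexed by the maps `σ` with `q ≤ σ q` for all `q`; the non-injective
ones vanish because `f` is alternating, and the only injective one is the identity. Only the product
of the diagonal coefficients `∏ i < q, (1 - t i)` survives, and there the factor `1 - t i` occurs
once for each `q > i`.
-/

open Finset

theorem eq_id_of_injective_of_le {α : Type*} [PartialOrder α] [Finite α] {σ : α → α}
    (hσ : Function.Injective σ) (hle : ∀ a, a ≤ σ a) : σ = id := by
  funext a
  -- Every orbit is a cycle, so `σ a ≤ σ (σ a) ≤ ⋯` comes back to `a`.
  obtain ⟨n, hn, hper⟩ := hσ.mem_periodicPts a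
  have hreturn : σ^[n - 1] (σ a) = a := by
    rw [← Function.iterate_succ_apply, Nat.succ_eq_add_one, Nat.sub_add_cancel hn, hper.eq]
  have hge : σ a ≤ a := (Function.id_le_iterate_of_id_le hle (n - 1) (σ a)).trans_eq hreturn
  exact le_antisymm hge (hle a)

theorem prod_prod_Iio_eq_prod_pow_card_Ioi {ι M : Type*} [Preorder ι] [Fintype ι]
    [LocallyFiniteOrderBot ι] [LocallyFiniteOrderTop ι] [CommMonoid M] (s : ι → M) :
    ∏ q, ∏ i ∈ Iio q, s i = ∏ i, s i ^ #(Ioi i) := by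
  rw [prod_comm' (t' := univ) (s' := fun i => Ioi i) (by simp)]
  simp only [prod_const]

section AlternatingMap

variable {R V W ι : Type*} [CommSemiring R] [AddCommMonoid V] [Module R V] [AddCommMonoid W]
  [Module R W] [PartialOrder ι] [Fintype ι] [LocallyFiniteOrderTop ι]

theorem alternatingMap_sum_Ici_smul (f : V [⋀^ι]→ₗ[R] W) (θ : ι → V) (a : ι → ι → R) :
    f (fun q => ∑ r ∈ Ici q, a q r • θ r) = (∏ q, a q q) • f θ := by
  classical
  have hsmul (σ : ι → ι) :
      f (fun q => a q (σ q) • θ (σ q)) = (∏ q, a q (σ q)) • f (θ ∘ σ) :=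
    f.toMultilinearMap.map_smul_univ (fun q => a q (σ q)) (θ ∘ σ)
  have hvanish : ∀ σ ∈ Fintype.piFinset (fun q : ι => Ici q), σ ≠ id →
      f (fun q => a q (σ q) • θ (σ q)) = 0 := by
    intro σ hσ hne
    have hle : ∀ q, q ≤ σ q := by simpa only [Fintype.mem_piFinset, mem_Ici] using hσ
    have hnoninj : ¬ Function.Injective (θ ∘ σ) :=
      fun hinj => hne (eq_id_of_injective_of_le hinj.of_comp hle)
    rw [hsmul, f.map_eq_zero_of_not_injective _ hnoninj, smul_zero]
  calc f (fun q => ∑ r ∈ Ici q, a q r • θ r)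
      = ∑ σ ∈ Fintype.piFinset (fun q : ι => Ici q), f (fun q => a q (σ q) • θ (σ q)) :=
        f.toMultilinearMap.map_sum_finset (fun q r => a q r • θ r) (fun q => Ici q)
    _ = f (fun q => a q q • θ q) := sum_eq_single_of_mem id (by simp) hvanish
    _ = (∏ q, a q q) • f θ := hsmul id

theorem stmt9_general [LocallyFiniteOrderBot ι] [DecidableEq ι] (f : V [⋀^ι]→ₗ[R] W)
    (θ : ι → V) (s : ι → R) :
    f (fun q => ∑ r ∈ Ici q, (∏ i ∈ (Iic r).erase q, s i) • θ r) =
      (∏ r, s r ^ #(Ioi r)) • f θ := by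
  rw [alternatingMap_sum_Ici_smul f θ fun q r => ∏ i ∈ (Iic r).erase q, s i]
  simp only [Iic_erase, prod_prod_Iio_eq_prod_pow_card_Ioi]

end AlternatingMap

/-- For an alternating multilinear map `f` in `p ≥ 1` variables and the vectors
`θ^q_* = Σ_{r ≥ q} [∏_{i ≤ r, i ≠ q} (1−t_i)] θ^r` (indices `0`-based),
`f(θ^1_*,...,θ^p_*) = [∏_{r=1}^{p−1} (1−t_r)^{p−r}] f(θ^1,...,θ^p)`. -/
theorem stmt9 {V W : Type*} [AddCommGroup V] [Module ℝ V] [AddCommGroup W] [Module ℝ W]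
    {p : ℕ} (hp : 1 ≤ p) (f : AlternatingMap ℝ V W (Fin p))
    (θ : Fin p → V) (t : Fin p → ℝ) :
    f (fun q : Fin p =>
        ∑ r ∈ Finset.Ici q, (∏ i ∈ (Finset.Iic r).erase q, (1 - t i)) • θ r) =
      (∏ r : Fin p, (1 - t r) ^ (p - 1 - (r : ℕ))) • f θ := by
  simpa only [Fin.card_Ioi] using stmt9_general f θ fun i => 1 - t i
end

section
/- Let ι be a finite type, M a real vector space, and l ≥ 1. Let a : ι^{l+1} → ℝ be totally antisymmetric (interchanging any two arguments changes its sign) and let G : ι^{l} → M be arbitrary. Then Σ_{(x_1,...,x_{l+1}) ∈ ι^{l+1}} a(x_1,...,x_{l+1}) · G(x_1,...,x_l) = (1/(l+1)) Σ_{(x_1,...,x_{l+1}) ∈ ι^{l+1}} a(x_1,...,x_{l+1}) · Σ_{r=1}^{l+1} (−1)^{l+1−r} G(x_1,...,x_{r−1},x_{r+1},...,x_{l+1}). -/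
/-!
For each `r`, the cycle `σ` of `{r, …, l}` that sends `k` to `k + 1` for `r ≤ k < l`, and `l` to
`r`, satisfies `σ ∘ castSucc = succAbove r` and has sign `(-1) ^ (l - r)`. By total antisymmetry,
the substitution `x ↦ x ∘ σ` shows that deleting the argument at position `r` contributes, with its
sign, the same sum over `x` as deleting the last argument, for each of the `l + 1` positions `r`.
-/

open Equiv

/-- Total antisymmetry of a function `a` of the arguments `x k`, `k : κ`: interchanging two of the
arguments changes the sign of `a`, as for the intersection symbols `{i_1 … i_{l+1}}`. Unlike for
`AlternatingMap`, the arguments are mere indices, and in characteristic two `a` need not vanish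
where two of them coincide. -/
def IsTotallyAntisymm {κ ι A : Type*} [DecidableEq κ] [Neg A] (a : (κ → ι) → A) : Prop :=
  ∀ (x : κ → ι) (i j : κ), i ≠ j → a (x ∘ swap i j) = -a x

namespace IsTotallyAntisymm

section Perm

variable {κ ι : Type*} [DecidableEq κ] [Fintype κ]

theorem comp_perm {A : Type*} [AddCommGroup A] {a : (κ → ι) → A} (ha : IsTotallyAntisymm a)
    (x : κ → ι) (σ : Perm κ) : a (x ∘ σ) = Perm.sign σ • a x := by
  induction σ using Perm.swap_induction_on generalizing x with
  | one => simp
  | swap_mul σ i j hij ih =>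
    calc a (x ∘ (swap i j * σ)) = Perm.sign σ • a (x ∘ swap i j) := ih (x ∘ swap i j)
      _ = Perm.sign (swap i j * σ) • a x := by simp [ha x i j hij, Perm.sign_swap hij]

theorem sum_smul_comp_perm [Fintype ι] {R M : Type*} [Ring R] [AddCommGroup M] [Module R M]
    {a : (κ → ι) → R} (ha : IsTotallyAntisymm a) (F : (κ → ι) → M) (σ : Perm κ) :
    ∑ x, a x • F (x ∘ σ) = Perm.sign σ • ∑ x, a x • F x := by
  calc ∑ x, a x • F (x ∘ σ) = ∑ x, Perm.sign σ • a (x ∘ σ) • F (x ∘ σ) := by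
        simp only [ha.comp_perm, smul_assoc, smul_smul, Int.units_mul_self, one_smul]
    _ = Perm.sign σ • ∑ x, a (x ∘ σ) • F (x ∘ σ) := Finset.smul_sum.symm
    _ = Perm.sign σ • ∑ x, a x • F x :=
        congrArg (Perm.sign σ • ·) <|
          (σ.symm.arrowCongr (Equiv.refl ι)).sum_comp fun x ↦ a x • F x

end Perm

theorem sum_smul_comp_succAbove {ι R M : Type*} [Fintype ι] [Ring R] [AddCommGroup M] [Module R M]
    {l : ℕ} {a : (Fin (l + 1) → ι) → R} (ha : IsTotallyAntisymm a) (G : (Fin l → ι) → M)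
    (r : Fin (l + 1)) :
    ∑ x, a x • G (x ∘ r.succAbove) =
      (-1 : R) ^ (l - (r : ℕ)) • ∑ x, a x • G (x ∘ Fin.castSucc) := by
  let σ : Perm (Fin (l + 1)) := r.cycleIcc (Fin.last l)
  have hσ : σ ∘ Fin.castSucc = r.succAbove := by
    rw [← Fin.succAbove_last]
    exact Fin.cycleIcc_comp_succAbove r (Fin.last l) r.le_last
  have hsign : Perm.sign σ = (-1) ^ (l - (r : ℕ)) := Fin.sign_cycleIcc_of_le r.le_last
  calc ∑ x, a x • G (x ∘ r.succAbove)
      = ∑ x, a x • G ((x ∘ σ) ∘ Fin.castSucc) := by simp only [Function.comp_assoc, hσ]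
    _ = Perm.sign σ • ∑ x, a x • G (x ∘ Fin.castSucc) :=
        ha.sum_smul_comp_perm (fun x ↦ G (x ∘ Fin.castSucc)) σ
    _ = (-1 : R) ^ (l - (r : ℕ)) • ∑ x, a x • G (x ∘ Fin.castSucc) := by
        simp [hsign, Units.smul_def, ← Int.cast_smul_eq_zsmul R]

end IsTotallyAntisymm

theorem stmt12_general {ι R M : Type*} [Fintype ι] [Ring R] [AddCommGroup M] [Module R M]
    {l : ℕ} {a : (Fin (l + 1) → ι) → R} (ha : IsTotallyAntisymm a) (G : (Fin l → ι) → M) :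
    ∑ x, a x • ∑ r : Fin (l + 1), (-1 : R) ^ (l - (r : ℕ)) • G (x ∘ r.succAbove) =
      ((l : R) + 1) • ∑ x, a x • G (x ∘ Fin.castSucc) := by
  have hcomm (n : ℕ) (c : R) (m : M) : c • (-1 : R) ^ n • m = (-1 : R) ^ n • c • m := by
    rw [smul_smul, smul_smul, ((Commute.neg_one_right c).pow_right n).eq]
  have hsq (n : ℕ) : (-1 : R) ^ n * (-1) ^ n = 1 := pow_mul_pow_eq_one n (by simp)
  calc ∑ x, a x • ∑ r : Fin (l + 1), (-1 : R) ^ (l - (r : ℕ)) • G (x ∘ r.succAbove)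
      = ∑ r : Fin (l + 1), (-1 : R) ^ (l - (r : ℕ)) • ∑ x, a x • G (x ∘ r.succAbove) := by
        simp only [Finset.smul_sum, hcomm]
        exact Finset.sum_comm
    _ = ∑ _r : Fin (l + 1), ∑ x, a x • G (x ∘ Fin.castSucc) := by
        simp only [ha.sum_smul_comp_succAbove, smul_smul, hsq, one_smul]
    _ = ((l : R) + 1) • ∑ x, a x • G (x ∘ Fin.castSucc) := by
        rw [Fin.sum_const, ← Nat.cast_smul_eq_nsmul R, Nat.cast_succ]

/-- Symmetrisation identity: for a totally antisymmetric `a : ι^{l+1} → ℝ` and an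
arbitrary `G : ι^l → M`,
`Σ_x a(x) G(x_1,...,x_l)
   = (1/(l+1)) Σ_x a(x) Σ_{r=1}^{l+1} (−1)^{l+1−r} G(x_1,..,x_{r−1},x_{r+1},..,x_{l+1})`.
(Indices `0`-based: deleting position `r` is `x ∘ Fin.succAbove r`, with sign
`(−1)^{l−r}`.) -/
theorem stmt12 {ι : Type*} [Fintype ι] {M : Type*} [AddCommGroup M] [Module ℝ M]
    {l : ℕ} (hl : 1 ≤ l)
    (a : (Fin (l + 1) → ι) → ℝ)
    (ha : ∀ (x : Fin (l + 1) → ι) (i j : Fin (l + 1)), i ≠ j →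
      a (x ∘ Equiv.swap i j) = - a x)
    (G : (Fin l → ι) → M) :
    ∑ x : Fin (l + 1) → ι, a x • G (x ∘ Fin.castSucc) =
      (1 / ((l : ℝ) + 1)) • ∑ x : Fin (l + 1) → ι, a x •
        ∑ r : Fin (l + 1), ((-1 : ℝ) ^ (l - (r : ℕ))) • G (x ∘ Fin.succAbove r) := by
  rw [stmt12_general ha G, one_div, inv_smul_smul₀ (by positivity)]
end

section
/- Let V be a real vector space, d ≥ 1 an integer, and 0 ≤ r < d. Let E^1,...,E^d and D^1,...,D^d be elements of V, and work in the exterior algebra Λ(V). For indices a_1,...,a_r ∈ {1,...,d} define e_{a_1...a_r}(E) = (1/(d−r)!) Σ_{a_{r+1},...,a_d = 1}^{d} ε_{a_1...a_d} E^{a_{r+1}} ∧ ⋯ ∧ E^{a_d}, where ε_{a_1...a_d} is the totally antisymmetric Levi-Civita symbol with ε_{1...d} = +1. Then the first-order variation of e in the direction D satisfies (1/(d−r)!) Σ_{a_{r+1},...,a_d} ε_{a_1...a_d} Σ_{j=r+1}^{d} E^{a_{r+1}} ∧ ⋯ ∧ D^{a_j} ∧ ⋯ ∧ E^{a_d} =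 Σ_{b=1}^{d} D^b ∧ e_{a_1...a_r b}(E), for all a_1,...,a_r. -/
/-- The Levi-Civita symbol on `{1,...,n}`: the sign of `c` if `c` is a permutation,
and `0` otherwise (i.e. `0` whenever two indices coincide). -/
noncomputable def leviCivita {n : ℕ} (c : Fin n → Fin n) : ℤ :=
  if h : Function.Bijective c then Equiv.Perm.sign (Equiv.ofBijective c h) else 0

/-- The wedge product `x_1 ∧ x_2 ∧ ⋯ ∧ x_m` in the exterior algebra. -/
noncomputable def wedgeOfFn {V : Type*} [AddCommGroup V] [Module ℝ V] {m : ℕ}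
    (x : Fin m → V) : ExteriorAlgebra ℝ V :=
  (List.ofFn fun l : Fin m => ExteriorAlgebra.ι ℝ (x l)).prod

/-!
By multilinearity the first-order variation of the wedge product is a sum of `k + 1` terms, one for
each slot in which `D` replaces `E`. Renaming the summation indices by the transposition of two
slots changes the sign of both the antisymmetric coefficient and the wedge product, so every slot
contributes the same amount. Hence the variation is `k + 1` times the term with `D` in front; the
factor turns `1 / (k + 1)!` into `1 / k!`, and the first summation index becomes the index `c` of
`D c`.
-/

open Equiv Function

section Antisymmetric

variable {n ι R : Type*} [Fintype n] [DecidableEq n] [Ring R]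

/-- Total antisymmetry of an array of components `ε b = ε_{b₁ ... bₖ}`: permuting the slots `n`
multiplies a component by the sign of the permutation. Vanishing on repeated indices is not
demanded: it follows unless `2` is a zero divisor. -/
def IsTotallyAntisymmetric (ε : (n → ι) → R) : Prop :=
  ∀ (b : n → ι) (σ : Perm n), ε (b ∘ σ) = Perm.sign σ • ε b

namespace IsTotallyAntisymmetric

variable {M N : Type*} [AddCommMonoid M] [Module R M] [AddCommGroup N] [Module R N]
  {ε : (n → ι) → R}

theorem smul_map_comp_perm (hε : IsTotallyAntisymmetric ε) (f : M [⋀^n]→ₗ[R] N)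
    (b : n → ι) (x : n → M) (σ : Perm n) : ε (b ∘ σ) • f (x ∘ σ) = ε b • f x := by
  rw [hε, f.map_perm, smul_smul_smul_comm, smul_eq_mul, Int.units_mul_self, one_smul]

variable [Fintype ι]

theorem sum_smul_map_update_eq (hε : IsTotallyAntisymmetric ε)
    (f : M [⋀^n]→ₗ[R] N) (E D : ι → M) (i j : n) :
    ∑ b, ε b • f (update (E ∘ b) i (D (b i))) = ∑ b, ε b • f (update (E ∘ b) j (D (b j))) := by
  refine Fintype.sum_equiv ((swap i j).arrowCongr (.refl ι)) _ _ fun b => ?_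
  have hb : (swap i j).arrowCongr (.refl ι) b = b ∘ swap i j := rfl
  have hx : update (E ∘ b) i (D (b i)) ∘ swap i j =
      update (E ∘ b ∘ swap i j) j (D ((b ∘ swap i j) j)) := by
    rw [update_comp_equiv, symm_swap, swap_apply_left, comp_apply, swap_apply_right, comp_assoc]
  rw [hb, ← hx, hε.smul_map_comp_perm]

theorem sum_smul_linearDeriv (hε : IsTotallyAntisymmetric ε)
    (f : M [⋀^n]→ₗ[R] N) (E D : ι → M) (i : n) :
    ∑ b, ε b • f.toMultilinearMap.linearDeriv (E ∘ b) (D ∘ b) =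
      Fintype.card n • ∑ b, ε b • f (update (E ∘ b) i (D (b i))) := by
  calc ∑ b, ε b • f.toMultilinearMap.linearDeriv (E ∘ b) (D ∘ b)
      = ∑ j, ∑ b, ε b • f (update (E ∘ b) j (D (b j))) := by
        simp_rw [MultilinearMap.linearDeriv_apply, Finset.smul_sum]
        exact Finset.sum_comm
    _ = ∑ _j : n, ∑ b, ε b • f (update (E ∘ b) i (D (b i))) :=
        Finset.sum_congr rfl fun j _ => hε.sum_smul_map_update_eq f E D j i
    _ = Fintype.card n • ∑ b, ε b • f (update (E ∘ b) i (D (b i))) := by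
        rw [Finset.sum_const, Finset.card_univ]

end IsTotallyAntisymmetric

end Antisymmetric

theorem IsTotallyAntisymmetric.sum_smul_linearDeriv_ιMulti {ι R V : Type*} [Fintype ι]
    [CommRing R] [AddCommGroup V] [Module R V] {k : ℕ} {ε : (Fin (k + 1) → ι) → R}
    (hε : IsTotallyAntisymmetric ε) (E D : ι → V) :
    ∑ b, ε b • (ExteriorAlgebra.ιMulti R (k + 1)).toMultilinearMap.linearDeriv (E ∘ b) (D ∘ b) =
      (k + 1) • ∑ c, ExteriorAlgebra.ι R (D c) *
        ∑ b, ε (Fin.cons c b) • ExteriorAlgebra.ιMulti R k (E ∘ b) := by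
  have hcons (c : ι) (b : Fin k → ι) :
      ExteriorAlgebra.ιMulti R (k + 1)
          (update (E ∘ Fin.cons (α := fun _ => ι) c b) 0 (D c)) =
        ExteriorAlgebra.ι R (D c) * ExteriorAlgebra.ιMulti R k (E ∘ b) := by
    rw [ExteriorAlgebra.ιMulti_succ_apply, update_self]
    rfl
  rw [hε.sum_smul_linearDeriv _ E D 0, Fintype.card_fin,
    ← (Fin.consEquiv fun _ => ι).sum_comp, Fintype.sum_prod_type]
  simp only [Fin.consEquiv, coe_fn_mk, Fin.cons_zero, hcons, Finset.mul_sum, mul_smul_comm]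

section Form

variable {ι K V : Type*} [Fintype ι] [Field K] [AddCommGroup V] [Module K V] {k : ℕ}

/-- The form `(1/k!) ε_{b₁ ... bₖ} E^{b₁} ∧ ⋯ ∧ E^{bₖ}` with components `ε` in the frame `E`. For
`ε` the Levi-Civita symbol with its first `r` indices fixed to `a`, it is `e_{a₁ ... aᵣ}(E)`. -/
noncomputable def formOfComponents (ε : (Fin k → ι) → K) (E : ι → V) : ExteriorAlgebra K V :=
  (k.factorial : K)⁻¹ • ∑ b, ε b • ExteriorAlgebra.ιMulti K k (E ∘ b)

/-- The first-order variation of `formOfComponents ε` at the frame `E` in the direction `D`,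
encoded algebraically by `MultilinearMap.linearDeriv`: the part linear in `D` of
`formOfComponents ε (E + D)`. -/
noncomputable def formVariation (ε : (Fin k → ι) → K) (E D : ι → V) : ExteriorAlgebra K V :=
  (k.factorial : K)⁻¹ •
    ∑ b, ε b • (ExteriorAlgebra.ιMulti K k).toMultilinearMap.linearDeriv (E ∘ b) (D ∘ b)

theorem stmt16_general [CharZero K] {ε : (Fin (k + 1) → ι) → K} (hε : IsTotallyAntisymmetric ε)
    (E D : ι → V) :
    formVariation ε E D =
      ∑ c, ExteriorAlgebra.ι K (D c) * formOfComponents (fun b => ε (Fin.cons c b)) E := by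
  have hfactorial : ((k + 1).factorial : K)⁻¹ * ((k + 1 : ℕ) : K) = (k.factorial : K)⁻¹ := by
    rw [Nat.factorial_succ, Nat.cast_mul, mul_inv_rev,
      inv_mul_cancel_right₀ (Nat.cast_ne_zero.mpr k.succ_ne_zero)]
  simp_rw [formVariation, formOfComponents, mul_smul_comm]
  rw [hε.sum_smul_linearDeriv_ιMulti, ← Nat.cast_smul_eq_nsmul K, smul_smul, hfactorial,
    Finset.smul_sum]

end Form

theorem leviCivita_comp_perm {n : ℕ} (c : Fin n → Fin n) (σ : Perm (Fin n)) :
    leviCivita (c ∘ σ) = Perm.sign σ * leviCivita c := by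
  unfold leviCivita
  by_cases hc : Bijective c
  · have hcσ : Bijective (c ∘ σ) := hc.comp σ.bijective
    have hmul : ofBijective (c ∘ σ) hcσ = ofBijective c hc * σ := Equiv.ext fun _ => rfl
    rw [dif_pos hc, dif_pos hcσ, hmul, Perm.sign_mul, Units.val_mul, mul_comm]
  · rw [dif_neg hc, dif_neg (mt (Bijective.of_comp_iff c σ.bijective).mp hc), mul_zero]

theorem append_comp_perm {α : Type*} {r m : ℕ} (a : Fin r → α) (b : Fin m → α)
    (σ : Perm (Fin m)) :
    Fin.append a (b ∘ σ) =
      Fin.append a b ∘ finSumFinEquiv.permCongr (Perm.sumCongr (1 : Perm (Fin r)) σ) := by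
  ext x
  cases x using Fin.addCases <;> simp [permCongr_apply]

theorem isTotallyAntisymmetric_leviCivita_append {R : Type*} [Ring R] {r m : ℕ}
    (a : Fin r → Fin (r + m)) :
    IsTotallyAntisymmetric fun b : Fin m → Fin (r + m) => (leviCivita (Fin.append a b) : R) := by
  intro b σ
  beta_reduce
  rw [append_comp_perm, leviCivita_comp_perm, Perm.sign_permCongr, Perm.sign_sumCongr,
    Perm.sign_one, one_mul, Int.cast_mul, Units.smul_def, zsmul_eq_mul]

section WedgeOfFn

variable {V : Type*} [AddCommGroup V] [Module ℝ V] {m : ℕ} (x y : Fin m → V)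

theorem ιMulti_eq_wedgeOfFn : ExteriorAlgebra.ιMulti ℝ m x = wedgeOfFn x := rfl

theorem linearDeriv_ιMulti_eq_sum_wedgeOfFn :
    (ExteriorAlgebra.ιMulti ℝ m).toMultilinearMap.linearDeriv x y =
      ∑ j, wedgeOfFn fun l => if l = j then y l else x l := by
  rw [MultilinearMap.linearDeriv_apply]
  refine Finset.sum_congr rfl fun j _ => ?_
  rw [AlternatingMap.coe_multilinearMap, ιMulti_eq_wedgeOfFn]
  congr 1 with l
  rw [update_apply]
  exact ite_congr rfl (fun h => by rw [h]) fun _ => rfl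

end WedgeOfFn

/-- The variation formula `δe_{a_1...a_r} = δE^{a_{r+1}} ∧ e_{a_1...a_r a_{r+1}}` for the
natural volume elements `e_{a_1...a_r}(E) = (1/(d−r)!) ε_{a_1...a_d} E^{a_{r+1}} ∧ ⋯ ∧ E^{a_d}`:
with `d = r + (k+1)` (so `0 ≤ r < d`), frames `E, D : Fin d → V` and fixed indices
`a : Fin r → Fin d`,
`(1/(d−r)!) Σ_{a_{r+1},...,a_d} ε_{a_1...a_d} Σ_j E^{a_{r+1}} ∧ ⋯ ∧ D^{a_j} ∧ ⋯ ∧ E^{a_d}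
  = Σ_b D^b ∧ e_{a_1...a_r b}(E)`. -/
theorem stmt16 {V : Type*} [AddCommGroup V] [Module ℝ V]
    (r k : ℕ) (E D : Fin (r + (k + 1)) → V) (a : Fin r → Fin (r + (k + 1))) :
    (((k + 1).factorial : ℝ))⁻¹ •
      ∑ b : Fin (k + 1) → Fin (r + (k + 1)),
        ((leviCivita (Fin.append a b) : ℤ) : ℝ) •
          ∑ j : Fin (k + 1),
            wedgeOfFn (fun l : Fin (k + 1) => if l = j then D (b l) else E (b l)) =
    ∑ c : Fin (r + (k + 1)),
      ExteriorAlgebra.ι ℝ (D c) *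
        ((k.factorial : ℝ)⁻¹ •
          ∑ b : Fin k → Fin (r + (k + 1)),
            ((leviCivita ((Fin.append (Fin.snoc a c) b) ∘
                Fin.cast (by omega : r + (k + 1) = (r + 1) + k)) : ℤ) : ℝ) •
              wedgeOfFn (fun l : Fin k => E (b l))) := by
  simpa only [formVariation, formOfComponents, linearDeriv_ιMulti_eq_sum_wedgeOfFn,
    ιMulti_eq_wedgeOfFn, Fin.append_right_cons, comp_def] using
    stmt16_general (isTotallyAntisymmetric_leviCivita_append (R := ℝ) a) E D
end
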